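/- For every n ≥ 1 there exists a smooth function w : ℝⁿ → ℝ with 0 < D²w(x) < I for all x ∈ ℝⁿ (i.e. all eigenvalues of D²w(x) lie in (0,1)), satisfying Σ_{i=1}^n ln( λ_i(D²w(x)) / (1 − λ_i(D²w(x))) ) = −w(x) + (1/2)⟨x, Dw(x)⟩ for all x ∈ ℝⁿ, such that w is NOT a quadratic polynomial. -/

import Mathlib

open Real Filter Matrix
open scoped RealInnerProductSpace

noncomputable section

/-- The Hessian matrix of `u` at `x`, with entries the second iterated derivatives
in the coordinate directions. -/
def Hess (n : ℕ) (u : EuclideanSpace ℝ (Fin n) → ℝ) (x : EuclideanSpace ℝ (Fin n)) :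
    Matrix (Fin n) (Fin n) ℝ :=
  Matrix.of fun i j =>
    iteratedFDeriv ℝ 2 u x ![EuclideanSpace.single i 1, EuclideanSpace.single j 1]

open Classical in
/-- The eigenvalues of a real symmetric matrix (junk value `0` if not symmetric). -/
def eigs {n : ℕ} (A : Matrix (Fin n) (Fin n) ℝ) : Fin n → ℝ :=
  if h : A.IsHermitian then h.eigenvalues else 0

/-- `u` is a quadratic polynomial:
`u x = (1/2)⟨x, A x⟩ + ⟨β, x⟩ + c` with `A` symmetric. -/
def IsQuadPoly (n : ℕ) (u : EuclideanSpace ℝ (Fin n) → ℝ) : Prop :=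
  ∃ (A : Matrix (Fin n) (Fin n) ℝ) (β : EuclideanSpace ℝ (Fin n)) (c : ℝ), A.IsSymm ∧
    ∀ x, u x = (1/2) * (∑ i, ∑ j, A i j * x i * x j) + ⟪β, x⟫ + c

/-- The vector field of the first-order system for `(u, p) = (f - t f', f')`. -/
def odeField (t : ℝ) (y : ℝ × ℝ) : ℝ × ℝ :=
  (-t * Real.sigmoid (-y.1 - t * y.2 / 2), Real.sigmoid (-y.1 - t * y.2 / 2))

lemma sigmoid_lip (a b : ℝ) : |Real.sigmoid a - Real.sigmoid b| ≤ |a - b| := by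
  have h : LipschitzWith 1 Real.sigmoid := by
    apply lipschitzWith_of_nnnorm_deriv_le differentiable_sigmoid
    intro x
    rw [← NNReal.coe_le_coe]
    have h1 := Real.sigmoid_pos x
    have h2 := Real.sigmoid_lt_one x
    simp only [coe_nnnorm, deriv_sigmoid, Real.norm_eq_abs, NNReal.coe_one]
    rw [abs_le]
    constructor <;> nlinarith
  have := h.dist_le_mul a b
  simpa [Real.dist_eq] using this

lemma odeField_lip (R : NNReal) (t : ℝ) (ht : |t| ≤ R) :
    LipschitzWith ((1 + R) * (1 + R)) (odeField t) := by
  apply LipschitzWith.of_dist_le_mul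
  intro y z
  have hR : (0 : ℝ) ≤ R := R.2
  have h1 : |y.1 - z.1| ≤ dist y z := by
    rw [← Real.dist_eq, Prod.dist_eq]; exact le_max_left _ _
  have h2 : |y.2 - z.2| ≤ dist y z := by
    rw [← Real.dist_eq, Prod.dist_eq]; exact le_max_right _ _
  have h0 : 0 ≤ dist y z := dist_nonneg
  have hs : |Real.sigmoid (-y.1 - t * y.2 / 2) - Real.sigmoid (-z.1 - t * z.2 / 2)|
      ≤ (1 + R) * dist y z := by
    refine (sigmoid_lip _ _).trans ?_
    have : (-y.1 - t * y.2 / 2) - (-z.1 - t * z.2 / 2)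
        = -(y.1 - z.1) + -(t * (y.2 - z.2) / 2) := by ring
    rw [this]
    refine (abs_add_le _ _).trans ?_
    rw [abs_neg, abs_neg, abs_div, abs_mul]
    have h3 : |t| * |y.2 - z.2| ≤ R * dist y z := by gcongr
    have h4 : (0 : ℝ) ≤ |t| * |y.2 - z.2| := by positivity
    norm_num
    linarith
  have hmul : (0 : ℝ) ≤ (1 + R) * dist y z := by positivity
  rw [Prod.dist_eq]
  push_cast
  apply max_le
  · simp only [odeField, Real.dist_eq]
    rw [← mul_sub, abs_mul, abs_neg, mul_assoc]
    apply mul_le_mul _ hs (abs_nonneg _) (by positivity)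
    linarith
  · simp only [odeField, Real.dist_eq]
    refine hs.trans ?_
    rw [mul_assoc]
    nlinarith

lemma exists_local (R : NNReal) : ∃ α : ℝ → ℝ × ℝ, α 0 = (0, 1) ∧
    ∀ t ∈ Set.Ioo (-(R : ℝ)) R, HasDerivAt α (odeField t (α t)) t := by
  have hR : (0 : ℝ) ≤ R := R.2
  have hpl : IsPicardLindelof odeField (tmin := -(R : ℝ)) (tmax := R)
      ⟨0, by constructor <;> simp⟩ ((0 : ℝ), (1 : ℝ)) ((1 + R) * R) 0 (1 + R)
      ((1 + R) * (1 + R)) := by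
    constructor
    · intro t ht
      exact (odeField_lip R t (abs_le.2 ht)).lipschitzOnWith
    · intro x _
      apply Continuous.continuousOn
      have h := continuous_sigmoid
      unfold odeField
      fun_prop
    · intro t ht x _
      have h1 := Real.sigmoid_pos (-x.1 - t * x.2 / 2)
      have h2 := Real.sigmoid_lt_one (-x.1 - t * x.2 / 2)
      have h3 : |t| ≤ R := abs_le.2 ht
      have h4 := abs_nonneg t
      rw [Prod.norm_def]
      push_cast
      apply max_le
      · simp only [odeField, Real.norm_eq_abs]
        rw [abs_mul, abs_neg, abs_of_pos h1]
        nlinarith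
      · simp only [odeField, Real.norm_eq_abs]
        rw [abs_of_pos h1]
        linarith
    · simp
  obtain ⟨α, h0, h⟩ := hpl.exists_eq_forall_mem_Icc_hasDerivWithinAt₀
  exact ⟨α, h0, fun t ht => (h t (Set.Ioo_subset_Icc_self ht)).hasDerivAt
    (Icc_mem_nhds ht.1 ht.2)⟩

lemma exists_global : ∃ α : ℝ → ℝ × ℝ, α 0 = (0, 1) ∧
    ∀ t, HasDerivAt α (odeField t (α t)) t := by
  choose β h0 hβ using exists_local
  have huniq : ∀ R S : NNReal, R ≤ S → ∀ t ∈ Set.Ioo (-(R : ℝ)) R, β R t = β S t := by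
    intro R S hRS t ht
    have hRS' : (R : ℝ) ≤ S := hRS
    have hpos : (0 : ℝ) < R := by linarith [ht.1, ht.2]
    refine ODE_solution_unique_of_mem_Ioo (v := odeField) (s := fun _ => Set.univ)
      (K := (1 + R) * (1 + R)) (t₀ := 0) ?_ ⟨by linarith, hpos⟩ ?_ ?_ ?_ ht
    · intro t ht
      exact (odeField_lip R t (abs_le.2 ⟨ht.1.le, ht.2.le⟩)).lipschitzOnWith
    · exact fun t ht => ⟨hβ R t ht, trivial⟩
    · exact fun t ht => ⟨hβ S t ⟨by linarith [ht.1], by linarith [ht.2]⟩, trivial⟩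
    · rw [h0, h0]
  have key : ∀ S : NNReal, ∀ t ∈ Set.Ioo (-(S : ℝ)) S, β (‖t‖₊ + 1) t = β S t := by
    intro S t ht
    rcases le_total (‖t‖₊ + 1) S with h | h
    · refine huniq _ _ h t ?_
      have := abs_le.1 (le_refl |t|)
      constructor <;> push_cast <;> rw [Real.norm_eq_abs] <;> linarith [this.1, this.2]
    · exact (huniq _ _ h t ht).symm
  refine ⟨fun t => β (‖t‖₊ + 1) t, h0 _, fun t => ?_⟩
  have ht : t ∈ Set.Ioo (-((‖t‖₊ + 1 : NNReal) : ℝ)) ((‖t‖₊ + 1 : NNReal) : ℝ) := by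
    have := abs_le.1 (le_refl |t|)
    constructor <;> push_cast <;> rw [Real.norm_eq_abs] <;> linarith [this.1, this.2]
  refine (hβ (‖t‖₊ + 1) t ht).congr_of_eventuallyEq ?_
  filter_upwards [Ioo_mem_nhds ht.1 ht.2] with s hs
  exact key _ s hs

/-- The one-dimensional solution. -/
lemma exists_one_dim : ∃ f p : ℝ → ℝ, f 0 = 0 ∧ p 0 = 1 ∧ (∀ t, HasDerivAt f (p t) t) ∧
    (∀ t, HasDerivAt p (Real.sigmoid (-f t + t * p t / 2)) t) := by
  obtain ⟨α, h0, h⟩ := exists_global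
  have h1 : ∀ t, HasDerivAt (fun t => (α t).1) (odeField t (α t)).1 t :=
    fun t => (hasFDerivAt_fst (𝕜 := ℝ) (p := α t)).comp_hasDerivAt t (h t)
  have h2 : ∀ t, HasDerivAt (fun t => (α t).2) (odeField t (α t)).2 t :=
    fun t => (hasFDerivAt_snd (𝕜 := ℝ) (p := α t)).comp_hasDerivAt t (h t)
  refine ⟨fun t => (α t).1 + t * (α t).2, fun t => (α t).2, by simp [h0], by simp [h0], ?_, ?_⟩
  · intro t
    have := (h1 t).add ((hasDerivAt_id t).mul (h2 t))
    refine this.congr_deriv ?_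
    simp [odeField]
  · intro t
    refine (h2 t).congr_deriv ?_
    simp only [odeField]
    congr 1
    ring

lemma smooth_one_dim {f p : ℝ → ℝ} (hf : ∀ t, HasDerivAt f (p t) t)
    (hp : ∀ t, HasDerivAt p (Real.sigmoid (-f t + t * p t / 2)) t) :
    ContDiff ℝ (⊤ : ℕ∞) f := by
  have hs : ContDiff ℝ (⊤ : ℕ∞) Real.sigmoid := contDiff_sigmoid.of_le le_top
  have key : ∀ n : ℕ, ContDiff ℝ n f ∧ ContDiff ℝ n p := by
    intro n
    induction n with
    | zero =>
      exact ⟨contDiff_zero.2 (continuous_iff_continuousAt.2 fun t => (hf t).continuousAt),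
        contDiff_zero.2 (continuous_iff_continuousAt.2 fun t => (hp t).continuousAt)⟩
    | succ n ih =>
      obtain ⟨i1, i2⟩ := ih
      have e1 : deriv f = p := funext fun t => (hf t).deriv
      have e2 : deriv p = fun t => Real.sigmoid (-f t + t * p t / 2) :=
        funext fun t => (hp t).deriv
      have hsn : ContDiff ℝ n Real.sigmoid := hs.of_le (by exact_mod_cast le_top)
      have i3 : ContDiff ℝ n (fun t => Real.sigmoid (-f t + t * p t / 2)) := by fun_prop
      constructor
      · push_cast
        rw [contDiff_succ_iff_deriv]
        exact ⟨fun t => (hf t).differentiableAt, by simp, by rw [e1]; exact i2⟩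
      · push_cast
        rw [contDiff_succ_iff_deriv]
        exact ⟨fun t => (hp t).differentiableAt, by simp, by rw [e2]; exact i3⟩
  exact contDiff_infty.2 fun n => (key n).1

lemma hasFDerivAt_coordSum {n : ℕ} {f p : ℝ → ℝ} (hf : ∀ t, HasDerivAt f (p t) t)
    (x : EuclideanSpace ℝ (Fin n)) :
    HasFDerivAt (fun x : EuclideanSpace ℝ (Fin n) => ∑ i, f (x i))
      (∑ i, p (x i) • (EuclideanSpace.proj i : EuclideanSpace ℝ (Fin n) →L[ℝ] ℝ)) x := by
  apply HasFDerivAt.fun_sum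
  intro i _
  exact (hf (x i)).comp_hasFDerivAt x
    (EuclideanSpace.proj i : EuclideanSpace ℝ (Fin n) →L[ℝ] ℝ).hasFDerivAt

lemma hess_sum {n : ℕ} {f p q : ℝ → ℝ} (hf : ∀ t, HasDerivAt f (p t) t)
    (hp : ∀ t, HasDerivAt p (q t) t) (x : EuclideanSpace ℝ (Fin n)) :
    Hess n (fun x => ∑ i, f (x i)) x = Matrix.diagonal fun i => q (x i) := by
  have e1 : fderiv ℝ (fun x : EuclideanSpace ℝ (Fin n) => ∑ i, f (x i)) =
      fun x => ∑ i, p (x i) • (EuclideanSpace.proj i : EuclideanSpace ℝ (Fin n) →L[ℝ] ℝ) :=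
    funext fun x => (hasFDerivAt_coordSum hf x).fderiv
  have e2 : HasFDerivAt (fun x : EuclideanSpace ℝ (Fin n) =>
      ∑ i, p (x i) • (EuclideanSpace.proj i : EuclideanSpace ℝ (Fin n) →L[ℝ] ℝ))
      (∑ i, (q (x i) • (EuclideanSpace.proj i : EuclideanSpace ℝ (Fin n) →L[ℝ] ℝ)).smulRight
        (EuclideanSpace.proj i : EuclideanSpace ℝ (Fin n) →L[ℝ] ℝ)) x := by
    apply HasFDerivAt.fun_sum
    intro i _
    have h1 : HasFDerivAt (fun x : EuclideanSpace ℝ (Fin n) => p (x i))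
        (q (x i) • (EuclideanSpace.proj i : EuclideanSpace ℝ (Fin n) →L[ℝ] ℝ)) x :=
      (hp (x i)).comp_hasFDerivAt x
        (EuclideanSpace.proj i : EuclideanSpace ℝ (Fin n) →L[ℝ] ℝ).hasFDerivAt
    exact h1.smul_const (EuclideanSpace.proj i : EuclideanSpace ℝ (Fin n) →L[ℝ] ℝ)
  ext i j
  simp only [Hess, Matrix.of_apply]
  rw [iteratedFDeriv_two_apply, e1, e2.fderiv]
  simp [Matrix.diagonal_apply]

lemma eigs_diag {n : ℕ} (d : Fin n → ℝ) (g : ℝ → ℝ) :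
    ∑ i, g (eigs (Matrix.diagonal d) i) = ∑ i, g (d i) := by
  have hH : (Matrix.diagonal d).IsHermitian := by
    rw [Matrix.IsHermitian, Matrix.diagonal_conjTranspose]; simp
  have h := hH.roots_charpoly_eq_eigenvalues
  have hr : (∏ i, (Polynomial.X - Polynomial.C (d i))).roots = Multiset.map d Finset.univ.val := by
    have := Polynomial.roots_multiset_prod_X_sub_C (Multiset.map d Finset.univ.val)
    rw [Multiset.map_map] at this
    exact this
  rw [Matrix.charpoly_diagonal, hr] at h
  simp only [eigs, hH, dif_pos]
  have h2 := congrArg (fun m => (Multiset.map g m).sum) h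
  simp only [Multiset.map_map] at h2
  exact h2.symm

theorem nonquadratic_solution_exists_normalized (n : ℕ) (hn : 1 ≤ n) :
    ∃ w : EuclideanSpace ℝ (Fin n) → ℝ, ContDiff ℝ (⊤ : ℕ∞) w ∧
      (∀ x, (Hess n w x).PosDef ∧ ((1 : Matrix (Fin n) (Fin n) ℝ) - Hess n w x).PosDef) ∧
      (∀ x, ∑ i, Real.log (eigs (Hess n w x) i / (1 - eigs (Hess n w x) i))
        = -w x + (1/2) * ⟪x, gradient w x⟫) ∧
      ¬ IsQuadPoly n w := by
  obtain ⟨f, p, hf0, hp0, hf, hp⟩ := exists_one_dim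
  have hsm := smooth_one_dim hf hp
  have hH := fun x : EuclideanSpace ℝ (Fin n) => hess_sum hf hp x
  refine ⟨fun x => ∑ i, f (x i), ?_, ?_, ?_, ?_⟩
  · apply ContDiff.sum
    intro i _
    exact hsm.comp (EuclideanSpace.proj i : EuclideanSpace ℝ (Fin n) →L[ℝ] ℝ).contDiff
  · intro x
    rw [hH x]
    constructor
    · rw [Matrix.posDef_diagonal_iff]
      exact fun i => Real.sigmoid_pos _
    · rw [← Matrix.diagonal_one, Matrix.diagonal_sub, Matrix.posDef_diagonal_iff]
      exact fun i => sub_pos.2 (Real.sigmoid_lt_one _)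
  · intro x
    rw [hH x, eigs_diag _ (fun l => Real.log (l / (1 - l))), real_inner_comm,
      inner_gradient_left, (hasFDerivAt_coordSum hf x).fderiv]
    have hl : ∀ y : ℝ, Real.log (Real.sigmoid y / (1 - Real.sigmoid y)) = y := by
      intro y
      rw [← Real.sigmoid_neg, ← Real.sigmoid_mul_rexp_neg]
      have := (Real.sigmoid_pos y).ne'
      rw [← div_div, div_self this, one_div, ← Real.exp_neg, neg_neg, Real.log_exp]
    simp only [hl, _root_.sum_apply, Finset.sum_add_distrib, Finset.sum_neg_distrib,
      Finset.mul_sum]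
    congr 1
    apply Finset.sum_congr rfl
    intro i _
    simp
    ring
  · rintro ⟨A, β, c, -, hq⟩
    let i0 : Fin n := ⟨0, hn⟩
    have hline : ∀ t : ℝ, f t = (1/2) * A i0 i0 * t ^ 2 + β i0 * t + c := by
      intro t
      have h := hq (EuclideanSpace.single i0 t)
      have hs : ∑ i, f ((EuclideanSpace.single i0 t : EuclideanSpace ℝ (Fin n)) i) = f t := by
        rw [Finset.sum_eq_single i0]
        · simp
        · intro b _ hb
          simp [hb, hf0]
        · simp
      beta_reduce at h
      rw [hs] at h
      rw [h]
      have : ∑ i, ∑ j, A i j * (EuclideanSpace.single i0 t : EuclideanSpace ℝ (Fin n)) i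
          * (EuclideanSpace.single i0 t : EuclideanSpace ℝ (Fin n)) j = A i0 i0 * t ^ 2 := by
        rw [Finset.sum_eq_single i0, Finset.sum_eq_single i0]
        · simp; ring
        · intro b _ hb
          simp [hb]
        · simp
        · intro b _ hb
          simp [hb]
        · simp
      rw [this, real_inner_comm, EuclideanSpace.inner_single_left]
      simp
      ring
    have hfun : f = fun t => (1/2) * A i0 i0 * t ^ 2 + β i0 * t + c := funext hline
    have hpl : ∀ t, p t = A i0 i0 * t + β i0 := by
      intro t
      have h1 := hf t
      rw [hfun] at h1
      have h2 : HasDerivAt (fun t : ℝ => (1/2) * A i0 i0 * t ^ 2 + β i0 * t + c)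
          (A i0 i0 * t + β i0) t := by
        have := (((hasDerivAt_pow 2 t).const_mul ((1/2) * A i0 i0)).add
          ((hasDerivAt_id t).const_mul (β i0))).add_const c
        refine this.congr_deriv ?_
        simp
        ring
      exact h1.unique h2
    have hql : ∀ t, Real.sigmoid (-f t + t * p t / 2) = A i0 i0 := by
      intro t
      have h1 := hp t
      rw [show p = fun t => A i0 i0 * t + β i0 from funext hpl] at h1
      have h2 : HasDerivAt (fun t : ℝ => A i0 i0 * t + β i0) (A i0 i0) t := by
        have := ((hasDerivAt_id t).const_mul (A i0 i0)).add_const (β i0)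
        refine this.congr_deriv ?_
        simp
      rw [hpl]
      exact h1.unique h2
    have h3 := Real.sigmoid_injective ((hql 1).trans (hql 0).symm)
    have h4 := hpl 0
    rw [hpl, hpl, hline, hline] at h3
    rw [hp0] at h4
    norm_num at h3 h4
    linarith
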